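/- Let n ≥ 1 and 0 < q, q₁, q₂ ≤ ∞. Then the Young inequality L^{q₁} ∗ L^{q₂} ⊂ L^{q} on ℝⁿ holds (i.e., there is a constant C with ‖f∗g‖_{L^q} ≤ C‖f‖_{L^{q₁}}‖g‖_{L^{q₂}} for all nonnegative measurable f, g) if and only if 1 + 1/q = 1/q₁ + 1/q₂, 1/q ≤ 1/q₁ and 1/q ≤ 1/q₂. -/

import Mathlib

/-!
Sufficiency: the conditions force `1/q₁, 1/q₂ ≤ 1`. If both `q₁` and `q₂` are finite, put `F = f^q₁`,
`G = g^q₂` and write, inside the convolution integral,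
`f g = (F G)^(1/q) · F^(1/q₁ - 1/q) · G^(1/q₂ - 1/q)`.
The three exponents are nonnegative with sum `1`, so Hölder's inequality for three functions gives
the pointwise bound
`f∗g ≤ (F∗G)^(1/q) · (∫ F)^(1/q₁ - 1/q) · (∫ G)^(1/q₂ - 1/q)` (`cconv_le_holder`).
For `q = ∞` this is the claim; otherwise it is raised to the power `q` and integrated with
`∫ F∗G = ∫ F · ∫ G` (Tonelli). If one of `q₁, q₂` is infinite, then `q = ∞`, the other exponent
is `1`, and the estimate is immediate. The constant is `1`.

Necessity: test on indicators of sup-norm balls. With `f` and `g` the indicators of cubes of side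
`2s` and `t ≤ s`, the convolution equals `t^n` on the cube of side `s`, whence
`t^n s^(n/q) ≤ C (2s)^(n/q₁) t^(n/q₂)`, and symmetrically with `q₁, q₂` exchanged. Taking `s = t`
arbitrary gives the scaling identity; taking `s = 1`, `t → 0` gives `1/q₂ ≤ 1`, which by the scaling
identity is `1/q ≤ 1/q₁`.
-/

open scoped ENNReal NNReal BigOperators
open MeasureTheory

noncomputable section

/-- `1/q` for `q ∈ [0,∞]`, with the convention `1/∞ = 0`. -/
def iv (q : ℝ≥0∞) : ℝ := q⁻¹.toReal

/-- The dual exponent `q'` of `q ∈ [1,∞]`, defined by `1/q + 1/q' = 1`. -/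
def dualExp (q : ℝ≥0∞) : ℝ≥0∞ :=
  if q = ∞ then 1 else if q = 1 then ∞ else ENNReal.ofReal (q.toReal / (q.toReal - 1))

/-- Euclidean norm `|k|` of an integer vector `k ∈ ℤⁿ`. -/
def znorm {n : ℕ} (k : Fin n → ℤ) : ℝ := Real.sqrt (∑ i, ((k i : ℝ)) ^ 2)

/-- Japanese bracket `⟨k⟩ = (1+|k|²)^{1/2}` of an integer vector. -/
def zbr {n : ℕ} (k : Fin n → ℤ) : ℝ := Real.sqrt (1 + ∑ i, ((k i : ℝ)) ^ 2)

/-- Euclidean norm `|x|` on `ℝⁿ` (realized as `Fin n → ℝ`). -/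
def rnorm {n : ℕ} (x : Fin n → ℝ) : ℝ := Real.sqrt (∑ i, (x i) ^ 2)

/-- Japanese bracket `⟨x⟩ = (1+|x|²)^{1/2}` on `ℝⁿ`. -/
def rbr {n : ℕ} (x : Fin n → ℝ) : ℝ := Real.sqrt (1 + ∑ i, (x i) ^ 2)

/-- The weighted norm `‖a‖_{l(q,s)}` (weight `⟨k⟩^s`) of a nonnegative sequence on `ℤⁿ`,
valued in `ℝ≥0∞`.  For `q = ∞` it is `sup_k a_k ⟨k⟩^s`, otherwise
`(∑_k (a_k ⟨k⟩^s)^q)^{1/q}`. -/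
def lns (n : ℕ) (q : ℝ≥0∞) (s : ℝ) (a : (Fin n → ℤ) → ℝ≥0∞) : ℝ≥0∞ :=
  if q = ∞ then ⨆ k, a k * ENNReal.ofReal (zbr k ^ s)
  else (∑' k, (a k * ENNReal.ofReal (zbr k ^ s)) ^ q.toReal) ^ (1 / q.toReal)

/-- Convolution of (nonnegative) sequences on `ℤⁿ`: `(a∗b)(k) = ∑_j a_{k-j} b_j`. -/
def dconv {n : ℕ} (a b : (Fin n → ℤ) → ℝ≥0∞) : (Fin n → ℤ) → ℝ≥0∞ :=
  fun k => ∑' j, a (k - j) * b j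

/-- The weighted norm `‖f‖_{L(q,s)}` (weight `⟨x⟩^s`) of a nonnegative function on `ℝⁿ`.
For `q = ∞` it is `ess sup_x f(x) ⟨x⟩^s`, otherwise `(∫ (f(x) ⟨x⟩^s)^q dx)^{1/q}`. -/
def Lns (n : ℕ) (q : ℝ≥0∞) (s : ℝ) (f : (Fin n → ℝ) → ℝ≥0∞) : ℝ≥0∞ :=
  if q = ∞ then essSup (fun x => f x * ENNReal.ofReal (rbr x ^ s)) volume
  else (∫⁻ x, (f x * ENNReal.ofReal (rbr x ^ s)) ^ q.toReal) ^ (1 / q.toReal)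

/-- The power-weighted norm `‖f‖_{𝕃(q,s)}` (weight `|x|^s`) of a nonnegative function on `ℝⁿ`. -/
def Pns (n : ℕ) (q : ℝ≥0∞) (s : ℝ) (f : (Fin n → ℝ) → ℝ≥0∞) : ℝ≥0∞ :=
  if q = ∞ then essSup (fun x => f x * ENNReal.ofReal (rnorm x ^ s)) volume
  else (∫⁻ x, (f x * ENNReal.ofReal (rnorm x ^ s)) ^ q.toReal) ^ (1 / q.toReal)

/-- Convolution of (nonnegative) functions on `ℝⁿ`: `(f∗g)(x) = ∫ f(x-y) g(y) dy`. -/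
def cconv {n : ℕ} (f g : (Fin n → ℝ) → ℝ≥0∞) : (Fin n → ℝ) → ℝ≥0∞ :=
  fun x => ∫⁻ y, f (x - y) * g y

/-- The discrete fractional integral operator `(𝓘_λ a)(k) = ∑_{j ≠ k} a_j / |k-j|^{n-λ}`. -/
def dRiesz (n : ℕ) (lam : ℝ) (a : (Fin n → ℤ) → ℝ≥0∞) : (Fin n → ℤ) → ℝ≥0∞ :=
  fun k => ∑' j, if j = k then 0 else a j * ENNReal.ofReal (znorm (k - j) ^ (lam - (n : ℝ)))

/-- The Riesz potential `(I_λ f)(x) = ∫ f(y) / |x-y|^{n-λ} dy`. -/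
def cRiesz (n : ℕ) (lam : ℝ) (f : (Fin n → ℝ) → ℝ≥0∞) : (Fin n → ℝ) → ℝ≥0∞ :=
  fun x => ∫⁻ y, f y * ENNReal.ofReal (rnorm (x - y) ^ (lam - (n : ℝ)))

/-- Condition `𝒜₁`. -/
def condA1 (n : ℕ) (q q₁ q₂ : ℝ≥0∞) (s s₁ s₂ : ℝ) : Prop :=
  s ≤ s₁ ∧ s ≤ s₂ ∧ 0 ≤ s₁ + s₂ ∧
  1 + max (iv q + s / (n : ℝ)) 0 < max (iv q₁ + s₁ / (n : ℝ)) 0 + max (iv q₂ + s₂ / (n : ℝ)) 0 ∧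
  iv q + s / (n : ℝ) ≤ iv q₁ + s₁ / (n : ℝ) ∧
  iv q + s / (n : ℝ) ≤ iv q₂ + s₂ / (n : ℝ) ∧
  1 ≤ iv q₁ + s₁ / (n : ℝ) + iv q₂ + s₂ / (n : ℝ) ∧
  (iv q + s / (n : ℝ) = iv q₁ + s₁ / (n : ℝ) → q = q₁ ∧ s = s₁) ∧
  (iv q + s / (n : ℝ) = iv q₂ + s₂ / (n : ℝ) → q = q₂ ∧ s = s₂) ∧
  (1 = iv q₁ + s₁ / (n : ℝ) + iv q₂ + s₂ / (n : ℝ) → dualExp q₁ = q₂ ∧ -s₁ = s₂)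

/-- Condition `𝒜₂`. -/
def condA2 (q q₁ q₂ : ℝ≥0∞) (s s₁ s₂ : ℝ) : Prop :=
  s = 0 ∧ s₁ = 0 ∧ s₂ = 0 ∧
  ((q = q₁ ∧ q₂ = 1) ∨ (q = q₂ ∧ q₁ = 1) ∨ (q = ∞ ∧ iv q₁ + iv q₂ = 1))

/-- Condition `𝒜₃`. -/
def condA3 (n : ℕ) (q q₁ q₂ : ℝ≥0∞) (s s₁ s₂ : ℝ) : Prop :=
  s ≤ s₁ ∧ s ≤ s₂ ∧ iv q₁ + iv q₂ = 1 ∧ s₁ + s₂ = 0 ∧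
  iv q + s / (n : ℝ) < 0 ∧ 0 ≤ iv q₁ + s₁ / (n : ℝ) ∧ 0 ≤ iv q₂ + s₂ / (n : ℝ)

/-- Condition `𝒜₄`. -/
def condA4 (n : ℕ) (q q₁ q₂ : ℝ≥0∞) (s s₁ s₂ : ℝ) : Prop :=
  s ≤ s₁ ∧ s ≤ s₂ ∧ 0 ≤ s₁ + s₂ ∧
  1 + (iv q + s / (n : ℝ)) = iv q₁ + s₁ / (n : ℝ) + iv q₂ + s₂ / (n : ℝ) ∧
  iv q ≤ iv q₁ + iv q₂ ∧
  iv q + s / (n : ℝ) < iv q₁ + s₁ / (n : ℝ) ∧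
  iv q + s / (n : ℝ) < iv q₂ + s₂ / (n : ℝ) ∧
  0 < iv q + s / (n : ℝ) ∧
  ((s = s₁ ∨ s = s₂) → q ≠ ∞ ∧ q₁ ≠ 1 ∧ q₂ ≠ 1)

/-- Condition `𝒞₁`. -/
def condC1 (n : ℕ) (lam : ℝ) (q p : ℝ≥0∞) (s t : ℝ) : Prop :=
  s ≤ t ∧
  lam / (n : ℝ) + max (iv q + s / (n : ℝ)) 0 < max (iv p + t / (n : ℝ)) 0 ∧
  lam / (n : ℝ) + iv q + s / (n : ℝ) ≤ 1 ∧
  (lam / (n : ℝ) + iv q + s / (n : ℝ) = 1 → q = ∞ ∧ s = (n : ℝ) - lam)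

/-- Condition `𝒞₃`. -/
def condC3 (n : ℕ) (lam : ℝ) (q p : ℝ≥0∞) (s t : ℝ) : Prop :=
  s ≤ t ∧ p = 1 ∧ t = lam - (n : ℝ) ∧ iv q + s / (n : ℝ) < 0

/-- Condition `𝒞₄`. -/
def condC4 (n : ℕ) (lam : ℝ) (q p : ℝ≥0∞) (s t : ℝ) : Prop :=
  s ≤ t ∧
  lam / (n : ℝ) + iv q + s / (n : ℝ) = iv p + t / (n : ℝ) ∧
  iv q ≤ iv p ∧
  0 < iv q + s / (n : ℝ) ∧
  iv p + t / (n : ℝ) < 1 ∧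
  (s = t → q ≠ ∞ ∧ p ≠ 1)

end

lemma Lns_top (n : ℕ) (f : (Fin n → ℝ) → ℝ≥0∞) : Lns n ∞ 0 f = essSup f volume := by
  simp [Lns]

lemma Lns_of_ne_top (n : ℕ) {q : ℝ≥0∞} (h : q ≠ ∞) (f : (Fin n → ℝ) → ℝ≥0∞) :
    Lns n q 0 f = (∫⁻ x, f x ^ q.toReal) ^ iv q := by
  simp [Lns, h, iv, ENNReal.toReal_inv]

lemma iv_nonneg (q : ℝ≥0∞) : 0 ≤ iv q := ENNReal.toReal_nonneg

lemma iv_top : iv ∞ = 0 := by simp [iv]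

lemma iv_pos {q : ℝ≥0∞} (h0 : 0 < q) (h : q ≠ ∞) : 0 < iv q := by
  unfold iv
  exact ENNReal.toReal_pos (by simpa using h) (by simpa using h0.ne')

lemma toReal_mul_iv {q : ℝ≥0∞} (h0 : 0 < q) (h : q ≠ ∞) : q.toReal * iv q = 1 := by
  rw [iv, ENNReal.toReal_inv]
  exact mul_inv_cancel₀ (ENNReal.toReal_pos h0.ne' h).ne'

lemma eq_one_of_iv_eq_one {q : ℝ≥0∞} (h : iv q = 1) : q = 1 := by
  simpa [iv, ENNReal.toReal_eq_one_iff] using h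

lemma cconv_comm {n : ℕ} (f g : (Fin n → ℝ) → ℝ≥0∞) : cconv f g = cconv g f := by
  ext x
  unfold cconv
  rw [← lintegral_sub_left_eq_self _ x]
  refine lintegral_congr fun y => ?_
  rw [sub_sub_cancel, mul_comm]

/-! ### Sufficiency -/

/-- Hölder's inequality for the splitting
`f g = (f^p₁ g^p₂)^a · (f^p₁)^b · (g^p₂)^c` of the convolution integrand. -/
lemma cconv_le_holder {n : ℕ} {f g : (Fin n → ℝ) → ℝ≥0∞} (hf : Measurable f) (hg : Measurable g)
    {p₁ p₂ a b c : ℝ} (ha : 0 ≤ a) (hb : 0 ≤ b) (hc : 0 ≤ c) (habc : a + b + c = 1)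
    (h1 : p₁ * (a + b) = 1) (h2 : p₂ * (a + c) = 1) (x : Fin n → ℝ) :
    cconv f g x ≤ (∫⁻ y, f (x - y) ^ p₁ * g y ^ p₂) ^ a * (∫⁻ y, f y ^ p₁) ^ b *
      (∫⁻ y, g y ^ p₂) ^ c := by
  have key := ENNReal.lintegral_prod_norm_pow_le (μ := (volume : Measure (Fin n → ℝ)))
    (Finset.univ : Finset (Fin 3))
    (f := ![fun y => f (x - y) ^ p₁ * g y ^ p₂, fun y => f (x - y) ^ p₁, fun y => g y ^ p₂])
    (by
      intro i _
      fin_cases i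
      · exact Measurable.aemeasurable (by simp only [Fin.zero_eta, Matrix.cons_val_zero]; fun_prop)
      · exact Measurable.aemeasurable (by
          show Measurable fun y => f (x - y) ^ p₁
          fun_prop)
      · exact Measurable.aemeasurable (by
          show Measurable fun y => g y ^ p₂
          fun_prop))
    (p := ![a, b, c]) (by simp [Fin.sum_univ_three, habc])
    (by intro i _; fin_cases i <;> simpa)
  simp only [Fin.prod_univ_three, Matrix.cons_val_zero, Matrix.cons_val_one, Matrix.cons_val] at key
  rw [lintegral_sub_left_eq_self (fun y => f y ^ p₁) x] at key
  refine le_trans (lintegral_mono fun y => le_of_eq ?_) key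
  have e1 : f (x - y) = (f (x - y) ^ p₁) ^ a * (f (x - y) ^ p₁) ^ b := by
    rw [← ENNReal.rpow_add_of_nonneg _ _ ha hb, ← ENNReal.rpow_mul, h1, ENNReal.rpow_one]
  have e2 : g y = (g y ^ p₂) ^ a * (g y ^ p₂) ^ c := by
    rw [← ENNReal.rpow_add_of_nonneg _ _ ha hc, ← ENNReal.rpow_mul, h2, ENNReal.rpow_one]
  rw [ENNReal.mul_rpow_of_nonneg _ _ ha]
  calc f (x - y) * g y = ((f (x - y) ^ p₁) ^ a * (f (x - y) ^ p₁) ^ b) *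
        ((g y ^ p₂) ^ a * (g y ^ p₂) ^ c) := by rw [← e1, ← e2]
    _ = _ := by ring

lemma lintegral_cconv {n : ℕ} {f g : (Fin n → ℝ) → ℝ≥0∞} (hf : Measurable f) (hg : Measurable g) :
    ∫⁻ x, cconv f g x = (∫⁻ x, f x) * ∫⁻ x, g x := by
  unfold cconv
  rw [lintegral_lintegral_swap (by fun_prop)]
  have : ∀ y, ∫⁻ x, f (x - y) * g y = (∫⁻ x, f x) * g y := fun y => by
    rw [lintegral_mul_const _ (by fun_prop), lintegral_sub_right_eq_self f y]
  simp_rw [this]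
  exact lintegral_const_mul _ hg

lemma young_top_one {n : ℕ} (f : (Fin n → ℝ) → ℝ≥0∞) {g : (Fin n → ℝ) → ℝ≥0∞}
    (hg : Measurable g) :
    Lns n ∞ 0 (cconv f g) ≤ Lns n ∞ 0 f * Lns n 1 0 g := by
  rw [Lns_top, Lns_top, Lns_of_ne_top n ENNReal.one_ne_top]
  simp only [ENNReal.toReal_one, ENNReal.rpow_one, iv, inv_one]
  refine essSup_le_of_ae_le _ (Filter.Eventually.of_forall fun x => ?_)
  have h : ∀ᵐ y, f (x - y) ≤ essSup f volume :=
    (quasiMeasurePreserving_sub_left_of_right_invariant volume x).ae (ENNReal.ae_le_essSup f)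
  calc cconv f g x ≤ ∫⁻ y, essSup f volume * g y :=
        lintegral_mono_ae (h.mono fun y hy => by gcongr)
    _ = _ := lintegral_const_mul _ hg

lemma young {n : ℕ} {q q₁ q₂ : ℝ≥0∞} (hq : 0 < q) (hq₁ : 0 < q₁) (hq₂ : 0 < q₂)
    (h : 1 + iv q = iv q₁ + iv q₂) (h1 : iv q ≤ iv q₁) (h2 : iv q ≤ iv q₂)
    {f g : (Fin n → ℝ) → ℝ≥0∞} (hf : Measurable f) (hg : Measurable g) :
    Lns n q 0 (cconv f g) ≤ Lns n q₁ 0 f * Lns n q₂ 0 g := by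
  have q_top : iv q = 0 → q = ∞ := fun h0 => by
    by_contra hne
    exact (iv_pos hq hne).ne' h0
  by_cases t1 : q₁ = ∞
  · subst t1
    rw [iv_top] at h h1
    have h0 : iv q = 0 := le_antisymm h1 (iv_nonneg q)
    obtain rfl := q_top h0
    obtain rfl := eq_one_of_iv_eq_one (q := q₂) (by linarith)
    exact young_top_one f hg
  by_cases t2 : q₂ = ∞
  · subst t2
    rw [iv_top] at h h2
    have h0 : iv q = 0 := le_antisymm h2 (iv_nonneg q)
    obtain rfl := q_top h0
    obtain rfl := eq_one_of_iv_eq_one (q := q₁) (by linarith)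
    rw [cconv_comm, mul_comm]
    exact young_top_one g hf
  have key := cconv_le_holder (n := n) hf hg (p₁ := q₁.toReal) (p₂ := q₂.toReal) (iv_nonneg q)
    (sub_nonneg.2 h1) (sub_nonneg.2 h2) (by linarith)
    (by rw [add_sub_cancel]; exact toReal_mul_iv hq₁ t1)
    (by rw [add_sub_cancel]; exact toReal_mul_iv hq₂ t2)
  rw [Lns_of_ne_top n t1, Lns_of_ne_top n t2]
  by_cases t : q = ∞
  · subst t
    rw [Lns_top]
    refine essSup_le_of_ae_le _ (Filter.Eventually.of_forall fun x => ?_)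
    simpa [iv_top] using key x
  rw [Lns_of_ne_top n t]
  have hp : 0 < q.toReal := ENNReal.toReal_pos hq.ne' t
  have hqi : iv q * q.toReal = 1 := by rw [mul_comm]; exact toReal_mul_iv hq t
  set A := ∫⁻ y, f y ^ q₁.toReal with hA
  set B := ∫⁻ y, g y ^ q₂.toReal with hB
  have hm : Measurable (cconv (fun y => f y ^ q₁.toReal) (fun y => g y ^ q₂.toReal)) := by
    unfold cconv
    fun_prop
  have hint : ∫⁻ x, cconv f g x ^ q.toReal ≤
      A * B * (A ^ (iv q₁ - iv q) * B ^ (iv q₂ - iv q)) ^ q.toReal := by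
    rw [hA, hB, ← lintegral_cconv (by fun_prop) (by fun_prop), ← lintegral_mul_const _ hm]
    refine lintegral_mono fun x => ?_
    refine (ENNReal.rpow_le_rpow (key x) hp.le).trans_eq ?_
    rw [mul_assoc, ENNReal.mul_rpow_of_nonneg _ _ hp.le, ← ENNReal.rpow_mul, hqi,
      ENNReal.rpow_one]
    rfl
  refine (ENNReal.rpow_le_rpow hint (iv_nonneg q)).trans_eq ?_
  have eA : A ^ iv q₁ = A ^ iv q * A ^ (iv q₁ - iv q) := by
    rw [← ENNReal.rpow_add_of_nonneg _ _ (iv_nonneg q) (sub_nonneg.2 h1), add_sub_cancel]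
  have eB : B ^ iv q₂ = B ^ iv q * B ^ (iv q₂ - iv q) := by
    rw [← ENNReal.rpow_add_of_nonneg _ _ (iv_nonneg q) (sub_nonneg.2 h2), add_sub_cancel]
  rw [ENNReal.mul_rpow_of_nonneg _ _ (iv_nonneg q), ENNReal.mul_rpow_of_nonneg _ _ (iv_nonneg q),
    ← ENNReal.rpow_mul, toReal_mul_iv hq t, ENNReal.rpow_one, eA, eB]
  ring

/-! ### Necessity -/

lemma le_Lns_of_le_on {n : ℕ} {q : ℝ≥0∞} (hq : 0 < q) {F : (Fin n → ℝ) → ℝ≥0∞}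
    {A : Set (Fin n → ℝ)} (hA : MeasurableSet A) (hA0 : volume A ≠ 0) {c : ℝ≥0∞}
    (h : ∀ x ∈ A, c ≤ F x) : c * volume A ^ iv q ≤ Lns n q 0 F := by
  by_cases t : q = ∞
  · subst t
    rw [Lns_top, iv_top, ENNReal.rpow_zero, mul_one]
    by_contra! hlt
    exact hA0 (measure_mono_null (fun x hx => hlt.trans_le (h x hx)) (meas_essSup_lt (f := F)))
  · rw [Lns_of_ne_top n t]
    have hp : 0 < q.toReal := ENNReal.toReal_pos hq.ne' t
    calc c * volume A ^ iv q = (c ^ q.toReal * volume A) ^ iv q := by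
          rw [ENNReal.mul_rpow_of_nonneg _ _ (iv_nonneg q), ← ENNReal.rpow_mul,
            toReal_mul_iv hq t, ENNReal.rpow_one]
      _ ≤ _ := by
          refine ENNReal.rpow_le_rpow ?_ (iv_nonneg q)
          rw [← setLIntegral_const]
          exact (setLIntegral_mono' hA fun x hx => ENNReal.rpow_le_rpow (h x hx) hp.le).trans
            (setLIntegral_le_lintegral _ _)

lemma Lns_indicator_le {n : ℕ} {q : ℝ≥0∞} (hq : 0 < q)
    {A : Set (Fin n → ℝ)} (hA : MeasurableSet A) :
    Lns n q 0 (A.indicator 1) ≤ volume A ^ iv q := by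
  by_cases t : q = ∞
  · subst t
    rw [Lns_top, iv_top, ENNReal.rpow_zero]
    refine essSup_le_of_ae_le _ (Filter.Eventually.of_forall fun x => ?_)
    exact Set.indicator_le_self' (f := (1 : (Fin n → ℝ) → ℝ≥0∞)) (fun _ _ => zero_le) x
  · rw [Lns_of_ne_top n t]
    have hp : 0 < q.toReal := ENNReal.toReal_pos hq.ne' t
    have : ∀ x, (A.indicator (1 : (Fin n → ℝ) → ℝ≥0∞) x) ^ q.toReal = A.indicator 1 x := by
      intro x
      by_cases hx : x ∈ A <;> simp [hx, hp]
    simp_rw [this]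
    rw [lintegral_indicator_one hA]

/-- The open sup-norm ball of side length `r`, i.e. radius `r / 2`. -/
def cube (n : ℕ) (r : ℝ) : Set (Fin n → ℝ) := Metric.ball 0 (r / 2)

lemma measurableSet_cube (n : ℕ) (r : ℝ) : MeasurableSet (cube n r) := measurableSet_ball

lemma volume_cube (n : ℕ) {r : ℝ} (hr : 0 < r) : volume (cube n r) = ENNReal.ofReal (r ^ n) := by
  rw [cube, Real.volume_pi_ball _ (by positivity), Fintype.card_fin, mul_div_cancel₀ _ two_ne_zero]

lemma volume_cube_rpow (n : ℕ) {r : ℝ} (hr : 0 < r) {a : ℝ} (ha : 0 ≤ a) :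
    volume (cube n r) ^ a = ENNReal.ofReal (r ^ (n * a)) := by
  rw [volume_cube n hr, ENNReal.ofReal_rpow_of_nonneg (by positivity) ha, Real.rpow_mul hr.le,
    Real.rpow_natCast]

/-- Young's inequality tested on two concentric cubes. -/
lemma cube_test {n : ℕ} {q q₁ q₂ : ℝ≥0∞} (hq : 0 < q) (hq₁ : 0 < q₁) (hq₂ : 0 < q₂) {C : ℝ≥0}
    (hC : ∀ f g : (Fin n → ℝ) → ℝ≥0∞, Measurable f → Measurable g →
      Lns n q 0 (cconv f g) ≤ C * Lns n q₁ 0 f * Lns n q₂ 0 g)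
    {s t : ℝ} (ht : 0 < t) (hts : t ≤ s) :
    t ^ (n : ℝ) * s ^ (n * iv q) ≤ C * (2 * s) ^ (n * iv q₁) * t ^ (n * iv q₂) := by
  have hs : 0 < s := ht.trans_le hts
  have low : volume (cube n t) * volume (cube n s) ^ iv q ≤
      Lns n q 0 (cconv ((cube n (2 * s)).indicator 1) ((cube n t).indicator 1)) := by
    refine le_Lns_of_le_on hq (measurableSet_cube n s)
      (by rw [volume_cube n hs]; simpa using pow_pos hs n) fun x hx => ?_
    rw [← lintegral_indicator_one (measurableSet_cube n t)]
    refine lintegral_mono fun y => ?_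
    by_cases hy : y ∈ cube n t
    · have : x - y ∈ cube n (2 * s) := by
        simp only [cube, mem_ball_zero_iff] at hx hy ⊢
        linarith [norm_sub_le x y]
      simp [hy, this]
    · simp [hy]
  have h := low.trans ((hC _ _ (measurable_one.indicator (measurableSet_cube n (2 * s)))
    (measurable_one.indicator (measurableSet_cube n t))).trans
    (mul_le_mul' (mul_le_mul' le_rfl (Lns_indicator_le hq₁ (measurableSet_cube n (2 * s))))
      (Lns_indicator_le hq₂ (measurableSet_cube n t))))
  rw [volume_cube_rpow n hs (iv_nonneg q), volume_cube_rpow n (by positivity) (iv_nonneg q₁),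
    volume_cube_rpow n ht (iv_nonneg q₂), volume_cube n ht, ← ENNReal.ofReal_coe_nnreal,
    ← ENNReal.ofReal_mul (by positivity), ← ENNReal.ofReal_mul (by positivity),
    ← ENNReal.ofReal_mul (by positivity), ENNReal.ofReal_le_ofReal_iff (by positivity)] at h
  rwa [Real.rpow_natCast]

lemma nonneg_of_rpow_bounded {a K : ℝ} (h : ∀ r : ℝ, 0 < r → r ≤ 1 → r ^ a ≤ K) : 0 ≤ a := by
  by_contra! ha
  have hK : 1 ≤ K := by simpa using h 1 one_pos le_rfl
  have h1 := h ((K + 1) ^ (1 / a)) (by positivity)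
    (Real.rpow_le_one_of_one_le_of_nonpos (by linarith) (one_div_neg.2 ha).le)
  rw [← Real.rpow_mul (by positivity), one_div_mul_cancel ha.ne, Real.rpow_one] at h1
  linarith

lemma iv_le_one {n : ℕ} (hn : 1 ≤ n) {q q₁ q₂ : ℝ≥0∞} (hq : 0 < q) (hq₁ : 0 < q₁) (hq₂ : 0 < q₂)
    {C : ℝ≥0} (hC : ∀ f g : (Fin n → ℝ) → ℝ≥0∞, Measurable f → Measurable g →
      Lns n q 0 (cconv f g) ≤ C * Lns n q₁ 0 f * Lns n q₂ 0 g) : iv q₂ ≤ 1 := by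
  have hn' : (0 : ℝ) < n := by exact_mod_cast hn
  have : 0 ≤ (n : ℝ) - n * iv q₂ := by
    refine nonneg_of_rpow_bounded (K := C * 2 ^ (n * iv q₁)) fun r hr hr1 => ?_
    have := cube_test hq hq₁ hq₂ hC hr hr1
    rw [Real.one_rpow, mul_one, mul_one] at this
    rw [Real.rpow_sub hr]
    exact (div_le_iff₀ (by positivity)).2 this
  nlinarith

lemma scaling {n : ℕ} (hn : 1 ≤ n) {q q₁ q₂ : ℝ≥0∞} (hq : 0 < q) (hq₁ : 0 < q₁) (hq₂ : 0 < q₂)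
    {C : ℝ≥0} (hC : ∀ f g : (Fin n → ℝ) → ℝ≥0∞, Measurable f → Measurable g →
      Lns n q 0 (cconv f g) ≤ C * Lns n q₁ 0 f * Lns n q₂ 0 g) :
    1 + iv q = iv q₁ + iv q₂ := by
  have hn' : (0 : ℝ) < n := by exact_mod_cast hn
  have bound : ∀ r : ℝ, 0 < r →
      r ^ (n + n * iv q - n * iv q₁ - n * iv q₂) ≤ C * 2 ^ (n * iv q₁) := by
    intro r hr
    have := cube_test hq hq₁ hq₂ hC hr le_rfl
    rw [Real.mul_rpow two_pos.le hr.le] at this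
    rw [Real.rpow_sub hr, Real.rpow_sub hr, Real.rpow_add hr, div_div]
    exact (div_le_iff₀ (by positivity)).2 (by linarith)
  have h1 := nonneg_of_rpow_bounded fun r hr _ => bound r hr
  have h2 : 0 ≤ -(n + n * iv q - n * iv q₁ - n * iv q₂) := by
    refine nonneg_of_rpow_bounded (K := C * 2 ^ (n * iv q₁)) fun r hr _ => ?_
    rw [Real.rpow_neg hr.le, ← Real.inv_rpow hr.le]
    exact bound _ (inv_pos.2 hr)
  have h3 : (n : ℝ) * (1 + iv q) = n * (iv q₁ + iv q₂) := by linarith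
  exact mul_left_cancel₀ hn'.ne' h3

/-- sharp continuous Young inequality, unweighted. -/
theorem continuous_young_sharp
    (n : ℕ) (hn : 1 ≤ n) (q q₁ q₂ : ℝ≥0∞) (hq : 0 < q) (hq₁ : 0 < q₁) (hq₂ : 0 < q₂) :
    (∃ C : ℝ≥0, ∀ f g : (Fin n → ℝ) → ℝ≥0∞, Measurable f → Measurable g →
        Lns n q 0 (cconv f g) ≤ C * Lns n q₁ 0 f * Lns n q₂ 0 g) ↔
      (1 + iv q = iv q₁ + iv q₂ ∧ iv q ≤ iv q₁ ∧ iv q ≤ iv q₂) := by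
  constructor
  · rintro ⟨C, hC⟩
    have e := scaling hn hq hq₁ hq₂ hC
    have b2 := iv_le_one hn hq hq₁ hq₂ hC
    have b1 : iv q₁ ≤ 1 := iv_le_one (C := C) hn hq hq₂ hq₁ fun f g hf hg => by
      rw [cconv_comm, mul_right_comm]
      exact hC g f hg hf
    exact ⟨e, by linarith, by linarith⟩
  · rintro ⟨h, h1, h2⟩
    exact ⟨1, fun f g hf hg => by simpa using young hq hq₁ hq₂ h h1 h2 hf hg⟩
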